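/- arXiv:2110.06670 — 2 statements merged into one kernel-verified Lean document; each statement's English description precedes it below -/
import Mathlib

section
/- Let Ω, Ω' ⊆ ℝ³ be open, let f = (F, f₃) : Ω → ℝ³ be a smooth map satisfying the contact equations with J_F > 0 on Ω, and let g = (G, g₃) : Ω' → Ω be a smooth conformal map. Then the cocycle condition S_CL(f ∘ g) = (S_CL(f) ∘ g)·(ZG)² + S_CL(g) holds on Ω'. -/
noncomputable section

open Complex

/-- The underlying space of the first Heisenberg group: ℝ³ with coordinates (x, y, t). -/
abbrev Heis : Type := ℝ × ℝ × ℝ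

/-- The left-invariant vector field X = ∂/∂x + 2y ∂/∂t, as a derivation. -/
def XD {E : Type*} [NormedAddCommGroup E] [NormedSpace ℝ E] (u : Heis → E) (p : Heis) : E :=
  fderiv ℝ u p (1, 0, 2 * p.2.1)

/-- The left-invariant vector field Y = ∂/∂y − 2x ∂/∂t, as a derivation. -/
def YD {E : Type*} [NormedAddCommGroup E] [NormedSpace ℝ E] (u : Heis → E) (p : Heis) : E :=
  fderiv ℝ u p (0, 1, -(2 * p.1))

/-- The vector field T = ∂/∂t, as a derivation. -/
def TD {E : Type*} [NormedAddCommGroup E] [NormedSpace ℝ E] (u : Heis → E) (p : Heis) : E :=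
  fderiv ℝ u p (0, 0, 1)

/-- Z = (X − iY)/2. -/
def ZD (u : Heis → ℂ) (p : Heis) : ℂ := (XD u p - Complex.I * YD u p) / 2

/-- Z̄ = (X + iY)/2. -/
def ZbD (u : Heis → ℂ) (p : Heis) : ℂ := (XD u p + Complex.I * YD u p) / 2

/-- The complexification F = f₁ + i f₂ of the horizontal components. -/
def CF (f1 f2 : Heis → ℝ) : Heis → ℂ := fun p => (f1 p : ℂ) + (f2 p : ℂ) * Complex.I

/-- Complexification of a real-valued function. -/
def Cplx (u : Heis → ℝ) : Heis → ℂ := fun p => (u p : ℂ)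

/-- The horizontal Jacobian J_F = Xf₁·Yf₂ − Yf₁·Xf₂. -/
def JF (f1 f2 : Heis → ℝ) (p : Heis) : ℝ := XD f1 p * YD f2 p - YD f1 p * XD f2 p

/-- The contact equations on Ω. -/
def ContactOn (f1 f2 f3 : Heis → ℝ) (Ω : Set Heis) : Prop :=
  ∀ p ∈ Ω, XD f3 p - 2 * f2 p * XD f1 p + 2 * f1 p * XD f2 p = 0 ∧
           YD f3 p - 2 * f2 p * YD f1 p + 2 * f1 p * YD f2 p = 0

/-- f = (f₁,f₂,f₃) is conformal on Ω: smooth, contact, J_F > 0, and the conformality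
equations hold. -/
def ConformalOn (f1 f2 f3 : Heis → ℝ) (Ω : Set Heis) : Prop :=
  ContDiffOn ℝ (⊤ : ℕ∞) f1 Ω ∧ ContDiffOn ℝ (⊤ : ℕ∞) f2 Ω ∧ ContDiffOn ℝ (⊤ : ℕ∞) f3 Ω ∧
  ContactOn f1 f2 f3 Ω ∧ (∀ p ∈ Ω, 0 < JF f1 f2 p) ∧
  ∀ p ∈ Ω, (XD f1 p) ^ 2 + (XD f2 p) ^ 2 = (YD f1 p) ^ 2 + (YD f2 p) ^ 2 ∧
           XD f1 p * YD f1 p + XD f2 p * YD f2 p = 0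

/-- The sub-Laplacian Δ_H = X² + Y². -/
def LapH {E : Type*} [NormedAddCommGroup E] [NormedSpace ℝ E] (u : Heis → E) (p : Heis) : E :=
  XD (XD u) p + YD (YD u) p

/-- The CR Schwarzian derivative S_CR(f) = (1/2)·J_F·Z²(J_F⁻¹). -/
def SCR (f1 f2 : Heis → ℝ) (p : Heis) : ℂ :=
  (1 / 2 : ℂ) * (JF f1 f2 p : ℂ) * ZD (ZD (fun q => (((JF f1 f2 q)⁻¹ : ℝ) : ℂ))) p

/-- The classical type Schwarzian S_CL(f) = Z³F/ZF − (3/2)(Z²F/ZF)². -/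
def SCL (f1 f2 : Heis → ℝ) (p : Heis) : ℂ :=
  ZD (ZD (ZD (CF f1 f2))) p / ZD (CF f1 f2) p
    - (3 / 2 : ℂ) * (ZD (ZD (CF f1 f2)) p / ZD (CF f1 f2) p) ^ 2

/-- The Preschwarzian Pf = Z(ln J_F). -/
def PS (f1 f2 : Heis → ℝ) (p : Heis) : ℂ := ZD (Cplx (fun q => Real.log (JF f1 f2 q))) p

/-- The map (f₁,f₂,f₃) packaged as a map Heis → Heis. -/
def Fmap (f1 f2 f3 : Heis → ℝ) (p : Heis) : Heis := (f1 p, f2 p, f3 p)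

/-! The contact equations say that `φ = (g₁, g₂, g₃)` maps horizontal vectors to horizontal ones, so
`Z(u ∘ φ) = (Zu ∘ φ) · ZG + (Z̄u ∘ φ) · conj (Z̄G)`. Since `J_G = |ZG|² − |Z̄G|²`, and since
`ZG · conj (Z̄G)` vanishes exactly when the conformality equations hold, a conformal map has
`ZG ≠ 0` and `Z̄G = 0`. What remains is the chain rule of one-variable complex analysis, with `Z` in
place of `d/dz`, and the cocycle identity follows as it does for the classical Schwarzian
derivative. -/

open Set Topology
open scoped ComplexConjugate

section HorizontalDerivatives

variable {E : Type*} [NormedAddCommGroup E] [NormedSpace ℝ E]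

theorem differentiableAt_of_contDiffOn {u : Heis → E} {Ω : Set Heis} {n : WithTop ℕ∞}
    (hΩ : IsOpen Ω) (hu : ContDiffOn ℝ n u Ω) (hn : n ≠ 0) {p : Heis} (hp : p ∈ Ω) :
    DifferentiableAt ℝ u p :=
  (hu.contDiffAt (hΩ.mem_nhds hp)).differentiableAt hn

theorem fderiv_apply_of_horizontal (u : Heis → E) (q : Heis) {a b c : ℝ}
    (h : c - 2 * q.2.1 * a + 2 * q.1 * b = 0) :
    fderiv ℝ u q (a, b, c) = a • XD u q + b • YD u q := by
  have hframe : ((a, b, c) : Heis) = a • (1, 0, 2 * q.2.1) + b • (0, 1, -(2 * q.1)) := by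
    ext
    · simp
    · simp
    · simp only [Prod.smul_mk, Prod.mk_add_mk, smul_eq_mul]
      linear_combination h
  rw [hframe, map_add, map_smul, map_smul, XD, YD]

theorem fderiv_comp_Fmap_apply {u : Heis → E} {g1 g2 g3 : Heis → ℝ} {p : Heis}
    (hu : DifferentiableAt ℝ u (Fmap g1 g2 g3 p)) (hg : DifferentiableAt ℝ (Fmap g1 g2 g3) p)
    (v : Heis) :
    fderiv ℝ (u ∘ Fmap g1 g2 g3) p v =
      fderiv ℝ u (Fmap g1 g2 g3 p) (fderiv ℝ g1 p v, fderiv ℝ g2 p v, fderiv ℝ g3 p v) := by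
  have hg' : HasFDerivAt (Fmap g1 g2 g3)
      ((fderiv ℝ g1 p).prod ((fderiv ℝ g2 p).prod (fderiv ℝ g3 p))) p :=
    hg.fst.hasFDerivAt.prodMk (hg.snd.fst.hasFDerivAt.prodMk hg.snd.snd.hasFDerivAt)
  rw [(hu.hasFDerivAt.comp p hg').fderiv]
  rfl

variable {u : Heis → E} {g1 g2 g3 : Heis → ℝ} {Ω : Set Heis} {p : Heis}

theorem ContactOn.XD_comp (hcont : ContactOn g1 g2 g3 Ω) (hp : p ∈ Ω)
    (hu : DifferentiableAt ℝ u (Fmap g1 g2 g3 p)) (hg : DifferentiableAt ℝ (Fmap g1 g2 g3) p) :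
    XD (u ∘ Fmap g1 g2 g3) p =
      XD g1 p • XD u (Fmap g1 g2 g3 p) + XD g2 p • YD u (Fmap g1 g2 g3 p) :=
  (fderiv_comp_Fmap_apply hu hg _).trans (fderiv_apply_of_horizontal u _ (hcont p hp).1)

theorem ContactOn.YD_comp (hcont : ContactOn g1 g2 g3 Ω) (hp : p ∈ Ω)
    (hu : DifferentiableAt ℝ u (Fmap g1 g2 g3 p)) (hg : DifferentiableAt ℝ (Fmap g1 g2 g3) p) :
    YD (u ∘ Fmap g1 g2 g3) p =
      YD g1 p • XD u (Fmap g1 g2 g3 p) + YD g2 p • YD u (Fmap g1 g2 g3 p) :=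
  (fderiv_comp_Fmap_apply hu hg _).trans (fderiv_apply_of_horizontal u _ (hcont p hp).2)

end HorizontalDerivatives

section Derivation

variable {u v : Heis → ℂ} {Ω : Set Heis} {p : Heis}

theorem ZD_eqOn (hΩ : IsOpen Ω) (h : EqOn u v Ω) : EqOn (ZD u) (ZD v) Ω := fun p hp => by
  have huv : u =ᶠ[𝓝 p] v := h.eventuallyEq_of_mem (hΩ.mem_nhds hp)
  simp only [ZD, XD, YD, huv.fderiv_eq]

theorem ZD_add (hu : DifferentiableAt ℝ u p) (hv : DifferentiableAt ℝ v p) :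
    ZD (u + v) p = ZD u p + ZD v p := by
  simp only [ZD, XD, YD, fderiv_add hu hv, add_apply]
  ring

theorem ZD_mul (hu : DifferentiableAt ℝ u p) (hv : DifferentiableAt ℝ v p) :
    ZD (u * v) p = ZD u p * v p + u p * ZD v p := by
  simp only [ZD, XD, YD, fderiv_mul hu hv, add_apply, smul_apply, smul_eq_mul]
  ring

theorem contDiffOn_ZD {m n : WithTop ℕ∞} (hΩ : IsOpen Ω) (hu : ContDiffOn ℝ n u Ω)
    (hmn : m + 1 ≤ n) : ContDiffOn ℝ m (ZD u) Ω := by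
  have hfderiv : ContDiffOn ℝ m (fderiv ℝ u) Ω := hu.fderiv_of_isOpen hΩ hmn
  have hX : ContDiffOn ℝ m (XD u) Ω := hfderiv.clm_apply (by fun_prop)
  have hY : ContDiffOn ℝ m (YD u) Ω := hfderiv.clm_apply (by fun_prop)
  exact (hX.sub (contDiffOn_const.mul hY)).div_const 2

theorem ZD_ZD_mul (hΩ : IsOpen Ω) (hu : ContDiffOn ℝ 2 u Ω) (hv : ContDiffOn ℝ 2 v Ω)
    (hp : p ∈ Ω) :
    ZD (ZD (u * v)) p = ZD (ZD u) p * v p + 2 * (ZD u p * ZD v p) + u p * ZD (ZD v) p := by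
  have differentiableAt {w : Heis → ℂ} (hw : ContDiffOn ℝ 1 w Ω) {q} (hq : q ∈ Ω) :
      DifferentiableAt ℝ w q :=
    differentiableAt_of_contDiffOn hΩ hw one_ne_zero hq
  have hu₁ : ContDiffOn ℝ 1 u Ω := hu.of_le one_le_two
  have hv₁ : ContDiffOn ℝ 1 v Ω := hv.of_le one_le_two
  have hZu : ContDiffOn ℝ 1 (ZD u) Ω := contDiffOn_ZD hΩ hu one_add_one_eq_two.le
  have hZv : ContDiffOn ℝ 1 (ZD v) Ω := contDiffOn_ZD hΩ hv one_add_one_eq_two.le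
  have hfirst : EqOn (ZD (u * v)) (ZD u * v + u * ZD v) Ω := fun q hq =>
    ZD_mul (differentiableAt hu₁ hq) (differentiableAt hv₁ hq)
  rw [ZD_eqOn hΩ hfirst hp,
    ZD_add ((differentiableAt hZu hp).mul (differentiableAt hv₁ hp))
      ((differentiableAt hu₁ hp).mul (differentiableAt hZv hp)),
    ZD_mul (differentiableAt hZu hp) (differentiableAt hv₁ hp),
    ZD_mul (differentiableAt hu₁ hp) (differentiableAt hZv hp)]
  ring

end Derivation

section ComplexHorizontalComponent

variable {f1 f2 f3 : Heis → ℝ} {Ω : Set Heis} {p : Heis}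

theorem contDiffOn_CF {n : WithTop ℕ∞} (hf1 : ContDiffOn ℝ n f1 Ω) (hf2 : ContDiffOn ℝ n f2 Ω) :
    ContDiffOn ℝ n (CF f1 f2) Ω :=
  (ofRealCLM.contDiff.comp_contDiffOn hf1).add
    ((ofRealCLM.contDiff.comp_contDiffOn hf2).mul contDiffOn_const)

theorem fderiv_CF_apply (h1 : DifferentiableAt ℝ f1 p) (h2 : DifferentiableAt ℝ f2 p) (v : Heis) :
    fderiv ℝ (CF f1 f2) p v = fderiv ℝ f1 p v + fderiv ℝ f2 p v * I := by
  have hF : HasFDerivAt (CF f1 f2) _ p :=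
    (ofRealCLM.hasFDerivAt.comp p h1.hasFDerivAt).add
      ((ofRealCLM.hasFDerivAt.comp p h2.hasFDerivAt).mul_const I)
  simp [hF.fderiv, mul_comm]

theorem ZD_CF (h1 : DifferentiableAt ℝ f1 p) (h2 : DifferentiableAt ℝ f2 p) :
    ZD (CF f1 f2) p = ((XD f1 p + YD f2 p) + (XD f2 p - YD f1 p) * I) / 2 := by
  simp only [ZD, XD, YD, fderiv_CF_apply h1 h2]
  linear_combination (-(fderiv ℝ f2 p (0, 1, -(2 * p.1)) : ℂ) / 2) * I_mul_I

theorem ZbD_CF (h1 : DifferentiableAt ℝ f1 p) (h2 : DifferentiableAt ℝ f2 p) :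
    ZbD (CF f1 f2) p = ((XD f1 p - YD f2 p) + (XD f2 p + YD f1 p) * I) / 2 := by
  simp only [ZbD, XD, YD, fderiv_CF_apply h1 h2]
  linear_combination ((fderiv ℝ f2 p (0, 1, -(2 * p.1)) : ℂ) / 2) * I_mul_I

theorem JF_eq_normSq_sub_normSq (h1 : DifferentiableAt ℝ f1 p) (h2 : DifferentiableAt ℝ f2 p) :
    JF f1 f2 p = normSq (ZD (CF f1 f2) p) - normSq (ZbD (CF f1 f2) p) := by
  rw [ZD_CF h1 h2, ZbD_CF h1 h2, JF]
  norm_cast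
  simp only [normSq_div, normSq_add_mul_I, normSq_ofNat]
  ring

theorem ZD_CF_ne_zero_of_JF_pos (h1 : DifferentiableAt ℝ f1 p) (h2 : DifferentiableAt ℝ f2 p)
    (hJ : 0 < JF f1 f2 p) : ZD (CF f1 f2) p ≠ 0 := by
  rw [JF_eq_normSq_sub_normSq h1 h2] at hJ
  exact normSq_pos.mp ((normSq_nonneg _).trans_lt (sub_pos.mp hJ))

theorem ZD_CF_mul_conj_ZbD_CF (h1 : DifferentiableAt ℝ f1 p) (h2 : DifferentiableAt ℝ f2 p) :
    ZD (CF f1 f2) p * conj (ZbD (CF f1 f2) p) =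
      ((XD f1 p ^ 2 + XD f2 p ^ 2 - (YD f1 p ^ 2 + YD f2 p ^ 2) : ℝ)
        - 2 * (XD f1 p * YD f1 p + XD f2 p * YD f2 p : ℝ) * I) / 4 := by
  rw [ZD_CF h1 h2, ZbD_CF h1 h2]
  simp only [map_div₀, map_add, map_sub, map_mul, conj_ofReal, conj_I, map_ofNat]
  push_cast
  linear_combination (-(XD f2 p ^ 2 - YD f1 p ^ 2) / 4 : ℂ) * I_mul_I

theorem ConformalOn.contDiffOn (hf : ConformalOn f1 f2 f3 Ω) :
    ContDiffOn ℝ (⊤ : ℕ∞) (Fmap f1 f2 f3) Ω :=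
  hf.1.prodMk (hf.2.1.prodMk hf.2.2.1)

theorem ConformalOn.differentiableAt (hf : ConformalOn f1 f2 f3 Ω) (hΩ : IsOpen Ω) (hp : p ∈ Ω) :
    DifferentiableAt ℝ (Fmap f1 f2 f3) p :=
  differentiableAt_of_contDiffOn hΩ hf.contDiffOn (by simp) hp

theorem ConformalOn.ZD_CF_ne_zero (hf : ConformalOn f1 f2 f3 Ω) (hΩ : IsOpen Ω) (hp : p ∈ Ω) :
    ZD (CF f1 f2) p ≠ 0 :=
  have hdiff := hf.differentiableAt hΩ hp
  ZD_CF_ne_zero_of_JF_pos hdiff.fst hdiff.snd.fst (hf.2.2.2.2.1 p hp)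

theorem ConformalOn.ZbD_CF_eq_zero (hf : ConformalOn f1 f2 f3 Ω) (hΩ : IsOpen Ω) (hp : p ∈ Ω) :
    ZbD (CF f1 f2) p = 0 := by
  have h1 : DifferentiableAt ℝ f1 p := (hf.differentiableAt hΩ hp).fst
  have h2 : DifferentiableAt ℝ f2 p := (hf.differentiableAt hΩ hp).snd.fst
  obtain ⟨hnorm, horth⟩ := hf.2.2.2.2.2 p hp
  have hprod : ZD (CF f1 f2) p * conj (ZbD (CF f1 f2) p) = 0 := by
    rw [ZD_CF_mul_conj_ZbD_CF h1 h2, hnorm, horth]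
    simp
  simpa [hf.ZD_CF_ne_zero hΩ hp] using hprod

end ComplexHorizontalComponent

/-- A CR map on `Ω`: a contact map that moreover preserves the CR structure of `ℍ¹`, the latter
encoded as `Z̄G = 0` for `G = g₁ + i g₂`. Regularity is left to the statements that use it, so that
each can ask for the number of derivatives it takes. -/
structure CRMapOn (g1 g2 g3 : Heis → ℝ) (Ω : Set Heis) : Prop where
  contactOn : ContactOn g1 g2 g3 Ω
  ZbD_CF_eq_zero : ∀ p ∈ Ω, ZbD (CF g1 g2) p = 0

theorem ConformalOn.crMapOn {g1 g2 g3 : Heis → ℝ} {Ω : Set Heis} (hg : ConformalOn g1 g2 g3 Ω)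
    (hΩ : IsOpen Ω) : CRMapOn g1 g2 g3 Ω :=
  ⟨hg.2.2.2.1, fun _ hp => hg.ZbD_CF_eq_zero hΩ hp⟩

section ChainRule

variable {g1 g2 g3 : Heis → ℝ} {u : Heis → ℂ} {Ω Ω' : Set Heis} {p : Heis}

theorem ContactOn.ZD_comp (hcont : ContactOn g1 g2 g3 Ω) (hp : p ∈ Ω)
    (hu : DifferentiableAt ℝ u (Fmap g1 g2 g3 p)) (hg : DifferentiableAt ℝ (Fmap g1 g2 g3) p) :
    ZD (u ∘ Fmap g1 g2 g3) p =
      ZD u (Fmap g1 g2 g3 p) * ZD (CF g1 g2) p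
        + ZbD u (Fmap g1 g2 g3 p) * conj (ZbD (CF g1 g2) p) := by
  have h1 : DifferentiableAt ℝ g1 p := hg.fst
  have h2 : DifferentiableAt ℝ g2 p := hg.snd.fst
  rw [ZD_CF h1 h2, ZbD_CF h1 h2, ZD, hcont.XD_comp hp hu hg, hcont.YD_comp hp hu hg]
  simp only [ZD, ZbD, real_smul, map_div₀, map_add, map_sub, map_mul, conj_ofReal, conj_I,
    map_ofNat]
  linear_combination (XD g2 p * YD u (Fmap g1 g2 g3 p) / 2 : ℂ) * I_mul_I

theorem CRMapOn.ZD_comp (hCR : CRMapOn g1 g2 g3 Ω) (hp : p ∈ Ω)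
    (hu : DifferentiableAt ℝ u (Fmap g1 g2 g3 p)) (hg : DifferentiableAt ℝ (Fmap g1 g2 g3) p) :
    ZD (u ∘ Fmap g1 g2 g3) p = ZD u (Fmap g1 g2 g3 p) * ZD (CF g1 g2) p := by
  rw [hCR.contactOn.ZD_comp hp hu hg, hCR.ZbD_CF_eq_zero p hp, map_zero, mul_zero, add_zero]

theorem CRMapOn.ZD_comp_eqOn (hCR : CRMapOn g1 g2 g3 Ω') (hΩ : IsOpen Ω) (hΩ' : IsOpen Ω')
    (hg : DifferentiableOn ℝ (Fmap g1 g2 g3) Ω') (hmaps : MapsTo (Fmap g1 g2 g3) Ω' Ω)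
    (hu : DifferentiableOn ℝ u Ω) :
    EqOn (ZD (u ∘ Fmap g1 g2 g3)) ((ZD u ∘ Fmap g1 g2 g3) * ZD (CF g1 g2)) Ω' := fun _ hq =>
  hCR.ZD_comp hq (hu.differentiableAt (hΩ.mem_nhds (hmaps hq)))
    (hg.differentiableAt (hΩ'.mem_nhds hq))

theorem CRMapOn.ZD_ZD_comp (hCR : CRMapOn g1 g2 g3 Ω') (hΩ : IsOpen Ω) (hΩ' : IsOpen Ω')
    (hg : ContDiffOn ℝ 2 (Fmap g1 g2 g3) Ω') (hmaps : MapsTo (Fmap g1 g2 g3) Ω' Ω)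
    (hu : ContDiffOn ℝ 2 u Ω) (hp : p ∈ Ω') :
    ZD (ZD (u ∘ Fmap g1 g2 g3)) p =
      ZD (ZD u) (Fmap g1 g2 g3 p) * ZD (CF g1 g2) p ^ 2
        + ZD u (Fmap g1 g2 g3 p) * ZD (ZD (CF g1 g2)) p := by
  have hnhds := hΩ'.mem_nhds hp
  have hg' := hg.differentiableOn two_ne_zero
  have hZu : DifferentiableOn ℝ (ZD u) Ω :=
    (contDiffOn_ZD hΩ hu one_add_one_eq_two.le).differentiableOn one_ne_zero
  have hZG : DifferentiableOn ℝ (ZD (CF g1 g2)) Ω' :=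
    (contDiffOn_ZD hΩ' (contDiffOn_CF hg.fst hg.snd.fst)
      one_add_one_eq_two.le).differentiableOn one_ne_zero
  have hfirst := hCR.ZD_comp_eqOn hΩ hΩ' hg' hmaps (hu.differentiableOn two_ne_zero)
  rw [ZD_eqOn hΩ' hfirst hp, ZD_mul ((hZu.comp hg' hmaps).differentiableAt hnhds)
    (hZG.differentiableAt hnhds), hCR.ZD_comp_eqOn hΩ hΩ' hg' hmaps hZu hp]
  simp only [Pi.mul_apply, Function.comp_apply]
  ring

theorem CRMapOn.ZD_ZD_ZD_comp (hCR : CRMapOn g1 g2 g3 Ω') (hΩ : IsOpen Ω) (hΩ' : IsOpen Ω')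
    (hg : ContDiffOn ℝ 3 (Fmap g1 g2 g3) Ω') (hmaps : MapsTo (Fmap g1 g2 g3) Ω' Ω)
    (hu : ContDiffOn ℝ 3 u Ω) (hp : p ∈ Ω') :
    ZD (ZD (ZD (u ∘ Fmap g1 g2 g3))) p =
      ZD (ZD (ZD u)) (Fmap g1 g2 g3 p) * ZD (CF g1 g2) p ^ 3
        + 3 * (ZD (ZD u) (Fmap g1 g2 g3 p) * ZD (CF g1 g2) p * ZD (ZD (CF g1 g2)) p)
        + ZD u (Fmap g1 g2 g3 p) * ZD (ZD (ZD (CF g1 g2))) p := by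
  have hg₂ : ContDiffOn ℝ 2 (Fmap g1 g2 g3) Ω' := hg.of_le (by norm_num)
  have hg' := hg.differentiableOn three_ne_zero
  have hZu : ContDiffOn ℝ 2 (ZD u) Ω := contDiffOn_ZD hΩ hu two_add_one_eq_three.le
  have hZG : ContDiffOn ℝ 2 (ZD (CF g1 g2)) Ω' :=
    contDiffOn_ZD hΩ' (contDiffOn_CF hg.fst hg.snd.fst) two_add_one_eq_three.le
  have hfirst := hCR.ZD_comp_eqOn hΩ hΩ' hg' hmaps (hu.differentiableOn three_ne_zero)
  rw [ZD_eqOn hΩ' (ZD_eqOn hΩ' hfirst) hp, ZD_ZD_mul hΩ' (hZu.comp hg₂ hmaps) hZG hp,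
    hCR.ZD_ZD_comp hΩ hΩ' hg₂ hmaps hZu hp,
    hCR.ZD_comp_eqOn hΩ hΩ' hg' hmaps (hZu.differentiableOn two_ne_zero) hp]
  simp only [Pi.mul_apply, Function.comp_apply]
  ring

end ChainRule

theorem stmt_8_general {Ω Ω' : Set Heis} (hΩ : IsOpen Ω) (hΩ' : IsOpen Ω') {f1 f2 : Heis → ℝ}
    (hf1 : ContDiffOn ℝ 3 f1 Ω) (hf2 : ContDiffOn ℝ 3 f2 Ω) {g1 g2 g3 : Heis → ℝ}
    (hg : ContDiffOn ℝ 3 (Fmap g1 g2 g3) Ω') (hCR : CRMapOn g1 g2 g3 Ω')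
    (hmaps : MapsTo (Fmap g1 g2 g3) Ω' Ω) {p : Heis} (hp : p ∈ Ω')
    (hZF : ZD (CF f1 f2) (Fmap g1 g2 g3 p) ≠ 0) (hZG : ZD (CF g1 g2) p ≠ 0) :
    SCL (f1 ∘ Fmap g1 g2 g3) (f2 ∘ Fmap g1 g2 g3) p =
      SCL f1 f2 (Fmap g1 g2 g3 p) * ZD (CF g1 g2) p ^ 2 + SCL g1 g2 p := by
  have hF : ContDiffOn ℝ 3 (CF f1 f2) Ω := contDiffOn_CF hf1 hf2
  have hfirst := hCR.ZD_comp_eqOn hΩ hΩ' (hg.differentiableOn three_ne_zero) hmaps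
    (hF.differentiableOn three_ne_zero) hp
  have hsecond := hCR.ZD_ZD_comp hΩ hΩ' (hg.of_le (by norm_num)) hmaps
    (hF.of_le (by norm_num)) hp
  have hthird := hCR.ZD_ZD_ZD_comp hΩ hΩ' hg hmaps hF hp
  have hcomp : CF (f1 ∘ Fmap g1 g2 g3) (f2 ∘ Fmap g1 g2 g3) = CF f1 f2 ∘ Fmap g1 g2 g3 := rfl
  simp only [SCL, hcomp, hfirst, hsecond, hthird, Pi.mul_apply, Function.comp_apply]
  field_simp
  ring

/-- right cocycle condition for the classical type Schwarzian:
S_CL(f ∘ g) = (S_CL(f) ∘ g)·(ZG)² + S_CL(g) on Ω', where f is a smooth positively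
oriented contact map on Ω and g : Ω' → Ω is a smooth conformal map. -/
theorem stmt_8 (Ω Ω' : Set Heis) (hΩ : IsOpen Ω) (hΩ' : IsOpen Ω')
    (f1 f2 f3 : Heis → ℝ)
    (hf1 : ContDiffOn ℝ (⊤ : ℕ∞) f1 Ω) (hf2 : ContDiffOn ℝ (⊤ : ℕ∞) f2 Ω)
    (hf3 : ContDiffOn ℝ (⊤ : ℕ∞) f3 Ω)
    (hcont : ContactOn f1 f2 f3 Ω) (hJ : ∀ p ∈ Ω, 0 < JF f1 f2 p)
    (g1 g2 g3 : Heis → ℝ) (hg : ConformalOn g1 g2 g3 Ω')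
    (hmaps : ∀ p ∈ Ω', Fmap g1 g2 g3 p ∈ Ω) :
    ∀ p ∈ Ω',
      SCL (fun q => f1 (Fmap g1 g2 g3 q)) (fun q => f2 (Fmap g1 g2 g3 q)) p
        = SCL f1 f2 (Fmap g1 g2 g3 p) * (ZD (CF g1 g2) p) ^ 2 + SCL g1 g2 p :=
  fun p hp => stmt_8_general hΩ hΩ' (hf1.of_le ENat.LEInfty.out) (hf2.of_le ENat.LEInfty.out)
    (hg.contDiffOn.of_le ENat.LEInfty.out) (hg.crMapOn hΩ') hmaps hp
    (ZD_CF_ne_zero_of_JF_pos (differentiableAt_of_contDiffOn hΩ hf1 (by simp) (hmaps p hp))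
      (differentiableAt_of_contDiffOn hΩ hf2 (by simp) (hmaps p hp)) (hJ _ (hmaps p hp)))
    (hg.ZD_CF_ne_zero hΩ' hp)
end
end

section
/- Let Ω ⊆ ℝ³ be open and let f = (f₁,f₂,f₃) : Ω → ℝ³ be a C² map satisfying the contact equations on Ω. If Δ_H f₁ = 0 and Δ_H f₂ = 0 on Ω, then also Δ_H f₃ = 0 on Ω. -/
noncomputable section

open Complex

/-!
The contact equations say that `V f₃ = ω(F, V F)` for `V = X, Y`, where `F = (f₁, f₂)` and `ω` is
a constant alternating form on `ℝ²`. Differentiating once more along `V` gives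
`V² f₃ = ω(V F, V F) + ω(F, V² F) = ω(F, V² F)`, and summing over `V = X, Y` yields
`Δ_H f₃ = ω(F, Δ_H F)`.
-/

open scoped Topology

section DerivAlong

variable {𝕜 E F G : Type*} [NontriviallyNormedField 𝕜]
  [NormedAddCommGroup E] [NormedSpace 𝕜 E] [NormedAddCommGroup F] [NormedSpace 𝕜 F]
  [NormedAddCommGroup G] [NormedSpace 𝕜 G] {V : E → E} {p : E}

variable (𝕜) in
/-- The derivative `V u` of a function `u` along the vector field `V`, as in the definitions of
`XD` and `YD`; it inherits from `fderiv` the value `0` where `u` is not differentiable. -/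
def derivAlong (V : E → E) (u : E → F) (p : E) : F :=
  fderiv 𝕜 u p (V p)

theorem differentiableAt_derivAlong {u : E → F} (hV : DifferentiableAt 𝕜 V p)
    (hu : ContDiffAt 𝕜 2 u p) : DifferentiableAt 𝕜 (derivAlong 𝕜 V u) p :=
  ((hu.fderiv_right (m := 1) one_add_one_eq_two.le).differentiableAt one_ne_zero).clm_apply hV

theorem derivAlong_congr {u v : E → F} (h : u =ᶠ[𝓝 p] v) :
    derivAlong 𝕜 V u p = derivAlong 𝕜 V v p := by
  rw [derivAlong, derivAlong, h.fderiv_eq]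

theorem derivAlong_bilinear {H : Type*} [NormedAddCommGroup H] [NormedSpace 𝕜 H]
    (B : F →L[𝕜] G →L[𝕜] H) {u : E → F} {v : E → G} (hu : DifferentiableAt 𝕜 u p)
    (hv : DifferentiableAt 𝕜 v p) :
    derivAlong 𝕜 V (fun q ↦ B (u q) (v q)) p =
      B (u p) (derivAlong 𝕜 V v p) + B (derivAlong 𝕜 V u p) (v p) := by
  rw [derivAlong, B.fderiv_of_bilinear hu hv]
  rfl

theorem derivAlong_prodMk {u : E → F} {v : E → G} (hu : DifferentiableAt 𝕜 u p)
    (hv : DifferentiableAt 𝕜 v p) :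
    derivAlong 𝕜 V (fun q ↦ (u q, v q)) p = (derivAlong 𝕜 V u p, derivAlong 𝕜 V v p) := by
  simp only [derivAlong, hu.fderiv_prodMk hv, ContinuousLinearMap.prod_apply]

theorem eventually_derivAlong_prodMk {u : E → F} {v : E → G} (hu : ContDiffAt 𝕜 2 u p)
    (hv : ContDiffAt 𝕜 2 v p) :
    derivAlong 𝕜 V (fun q ↦ (u q, v q)) =ᶠ[𝓝 p]
      fun q ↦ (derivAlong 𝕜 V u q, derivAlong 𝕜 V v q) := by
  filter_upwards [hu.eventually (by simp), hv.eventually (by simp)] with q huq hvq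
  exact derivAlong_prodMk (huq.differentiableAt two_ne_zero) (hvq.differentiableAt two_ne_zero)

theorem derivAlong_derivAlong_prodMk {u : E → F} {v : E → G} (hV : DifferentiableAt 𝕜 V p)
    (hu : ContDiffAt 𝕜 2 u p) (hv : ContDiffAt 𝕜 2 v p) :
    derivAlong 𝕜 V (derivAlong 𝕜 V fun q ↦ (u q, v q)) p =
      (derivAlong 𝕜 V (derivAlong 𝕜 V u) p, derivAlong 𝕜 V (derivAlong 𝕜 V v) p) := by
  rw [derivAlong_congr (eventually_derivAlong_prodMk hu hv)]
  exact derivAlong_prodMk (differentiableAt_derivAlong hV hu) (differentiableAt_derivAlong hV hv)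

theorem derivAlong_derivAlong_eq_of_alternating {h : E → G} {u : E → F} {ω : F →L[𝕜] F →L[𝕜] G}
    (hω : ∀ w, ω w w = 0) (hu : DifferentiableAt 𝕜 u p)
    (hVu : DifferentiableAt 𝕜 (derivAlong 𝕜 V u) p)
    (hh : derivAlong 𝕜 V h =ᶠ[𝓝 p] fun q ↦ ω (u q) (derivAlong 𝕜 V u q)) :
    derivAlong 𝕜 V (derivAlong 𝕜 V h) p = ω (u p) (derivAlong 𝕜 V (derivAlong 𝕜 V u) p) :=
  calc derivAlong 𝕜 V (derivAlong 𝕜 V h) p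
      = derivAlong 𝕜 V (fun q ↦ ω (u q) (derivAlong 𝕜 V u q)) p := derivAlong_congr hh
    _ = ω (u p) (derivAlong 𝕜 V (derivAlong 𝕜 V u) p)
          + ω (derivAlong 𝕜 V u p) (derivAlong 𝕜 V u p) := derivAlong_bilinear ω hu hVu
    _ = ω (u p) (derivAlong 𝕜 V (derivAlong 𝕜 V u) p) := by rw [hω, add_zero]

end DerivAlong

section SubLaplacian

variable {E F : Type*} [NormedAddCommGroup E] [NormedSpace ℝ E] [NormedAddCommGroup F]
  [NormedSpace ℝ F] {p : Heis}

/-- The vector field whose derivation is `XD`. -/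
def fieldX (p : Heis) : Heis := (1, 0, 2 * p.2.1)

/-- The vector field whose derivation is `YD`. -/
def fieldY (p : Heis) : Heis := (0, 1, -(2 * p.1))

theorem differentiable_fieldX : Differentiable ℝ fieldX := by
  unfold fieldX
  fun_prop

theorem differentiable_fieldY : Differentiable ℝ fieldY := by
  unfold fieldY
  fun_prop

theorem lapH_prodMk {u : Heis → E} {v : Heis → F} (hu : ContDiffAt ℝ 2 u p)
    (hv : ContDiffAt ℝ 2 v p) : LapH (fun q ↦ (u q, v q)) p = (LapH u p, LapH v p) :=
  congrArg₂ (· + ·) (derivAlong_derivAlong_prodMk (differentiable_fieldX p) hu hv)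
    (derivAlong_derivAlong_prodMk (differentiable_fieldY p) hu hv)

theorem lapH_eq_of_alternating {h : Heis → F} {u : Heis → E} {ω : E →L[ℝ] E →L[ℝ] F}
    (hω : ∀ w, ω w w = 0) (hu : ContDiffAt ℝ 2 u p)
    (hX : XD h =ᶠ[𝓝 p] fun q ↦ ω (u q) (XD u q))
    (hY : YD h =ᶠ[𝓝 p] fun q ↦ ω (u q) (YD u q)) :
    LapH h p = ω (u p) (LapH u p) := by
  have hXX : XD (XD h) p = ω (u p) (XD (XD u) p) :=
    derivAlong_derivAlong_eq_of_alternating hω (hu.differentiableAt two_ne_zero)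
      (differentiableAt_derivAlong (differentiable_fieldX p) hu) hX
  have hYY : YD (YD h) p = ω (u p) (YD (YD u) p) :=
    derivAlong_derivAlong_eq_of_alternating hω (hu.differentiableAt two_ne_zero)
      (differentiableAt_derivAlong (differentiable_fieldY p) hu) hY
  rw [LapH, LapH, hXX, hYY, map_add]

end SubLaplacian

section Contact

/-- The alternating form `ω((a, b), (c, d)) = 2 (b c - a d)` on `ℝ²`, for which the contact
equations of `(f₁, f₂, f₃)` read `V f₃ = ω(F, V F)` with `F = (f₁, f₂)` and `V = X, Y`. -/
def contactForm : ℝ × ℝ →L[ℝ] ℝ × ℝ →L[ℝ] ℝ :=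
  (2 : ℝ) • ((ContinuousLinearMap.mul ℝ ℝ).bilinearComp (.snd ℝ ℝ ℝ) (.fst ℝ ℝ ℝ)
    - (ContinuousLinearMap.mul ℝ ℝ).bilinearComp (.fst ℝ ℝ ℝ) (.snd ℝ ℝ ℝ))

theorem contactForm_apply (v w : ℝ × ℝ) :
    contactForm v w = 2 * (v.2 * w.1 - v.1 * w.2) :=
  rfl

theorem contactForm_self (w : ℝ × ℝ) : contactForm w w = 0 := by
  rw [contactForm_apply]
  ring

variable {f₁ f₂ f₃ : Heis → ℝ} {Ω : Set Heis} {p : Heis}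

theorem contactOn_iff_contactForm (hf₁ : DifferentiableOn ℝ f₁ Ω) (hf₂ : DifferentiableOn ℝ f₂ Ω)
    (hΩ : IsOpen Ω) :
    ContactOn f₁ f₂ f₃ Ω ↔ ∀ p ∈ Ω,
      XD f₃ p = contactForm (f₁ p, f₂ p) (XD (fun q ↦ (f₁ q, f₂ q)) p) ∧
      YD f₃ p = contactForm (f₁ p, f₂ p) (YD (fun q ↦ (f₁ q, f₂ q)) p) := by
  refine forall₂_congr fun p hp ↦ ?_
  have hd₁ := hf₁.differentiableAt (hΩ.mem_nhds hp)
  have hd₂ := hf₂.differentiableAt (hΩ.mem_nhds hp)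
  have hXF : XD (fun q ↦ (f₁ q, f₂ q)) p = (XD f₁ p, XD f₂ p) :=
    derivAlong_prodMk (V := fieldX) hd₁ hd₂
  have hYF : YD (fun q ↦ (f₁ q, f₂ q)) p = (YD f₁ p, YD f₂ p) :=
    derivAlong_prodMk (V := fieldY) hd₁ hd₂
  rw [hXF, hYF, contactForm_apply, contactForm_apply]
  constructor <;> rintro ⟨hX, hY⟩ <;> constructor <;> linarith

theorem lapH_eq_of_contactOn (hΩ : IsOpen Ω) (hf₁ : ContDiffOn ℝ 2 f₁ Ω)
    (hf₂ : ContDiffOn ℝ 2 f₂ Ω) (hf : ContactOn f₁ f₂ f₃ Ω) (hp : p ∈ Ω) :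
    LapH f₃ p = contactForm (f₁ p, f₂ p) (LapH f₁ p, LapH f₂ p) := by
  have hΩp : Ω ∈ 𝓝 p := hΩ.mem_nhds hp
  have hc₁ := hf₁.contDiffAt hΩp
  have hc₂ := hf₂.contDiffAt hΩp
  have hcontact := (contactOn_iff_contactForm (hf₁.differentiableOn two_ne_zero)
    (hf₂.differentiableOn two_ne_zero) hΩ).1 hf
  have hX : XD f₃ =ᶠ[𝓝 p] fun q ↦ contactForm (f₁ q, f₂ q) (XD (fun r ↦ (f₁ r, f₂ r)) q) :=
    Filter.eventually_of_mem hΩp fun q hq ↦ (hcontact q hq).1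
  have hY : YD f₃ =ᶠ[𝓝 p] fun q ↦ contactForm (f₁ q, f₂ q) (YD (fun r ↦ (f₁ r, f₂ r)) q) :=
    Filter.eventually_of_mem hΩp fun q hq ↦ (hcontact q hq).2
  rw [lapH_eq_of_alternating contactForm_self (hc₁.prodMk hc₂) hX hY, lapH_prodMk hc₁ hc₂]

end Contact

/-- a C² map satisfying the contact equations whose first two components
are harmonic for the sub-Laplacian also has harmonic third component. -/
theorem stmt_14 (Ω : Set Heis) (hΩ : IsOpen Ω) (f1 f2 f3 : Heis → ℝ)
    (hf1 : ContDiffOn ℝ 2 f1 Ω) (hf2 : ContDiffOn ℝ 2 f2 Ω) (hf3 : ContDiffOn ℝ 2 f3 Ω)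
    (hcont : ContactOn f1 f2 f3 Ω)
    (h1 : ∀ p ∈ Ω, LapH f1 p = 0) (h2 : ∀ p ∈ Ω, LapH f2 p = 0) :
    ∀ p ∈ Ω, LapH f3 p = 0 := by
  intro p hp
  rw [lapH_eq_of_contactOn hΩ hf1 hf2 hcont hp, h1 p hp, h2 p hp]
  exact map_zero (contactForm (f1 p, f2 p))
end
end
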